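/- Let Γ be a metric-compatible (x₀,t₀)-soliton on the trivial bundle ℝⁿ × ℝᵐ with polynomial curvature growth to order two, and set G₀(x) := e^{−|x−x₀|²/(4t₀)}. Then: (a) ∫_{ℝⁿ} ((4 − n) + |x−x₀|²/(2t₀)) |F(x)|² G₀(x) dx = 0; and (b) for every index γ ∈ {1, …, n}, ∫_{ℝⁿ} (x − x₀)_γ |F(x)|² G₀(x) dx = 0. -/

import Mathlib

open MeasureTheory Real Filter Matrix
open scoped ENNReal

noncomputable section

namespace YM

variable {n m : ℕ}

/-- A connection on the trivial bundle `ℝⁿ × ℝᵐ`, given by its coefficient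
matrices `Γ₁(x), …, Γₙ(x)`. -/
abbrev Conn (n m : ℕ) :=
  (Fin n → ℝ) → Fin n → Matrix (Fin m) (Fin m) ℝ

/-- Entrywise `i`-th partial derivative of a matrix-valued map on `ℝⁿ`. -/
def pder (i : Fin n) (A : (Fin n → ℝ) → Matrix (Fin m) (Fin m) ℝ)
    (x : Fin n → ℝ) : Matrix (Fin m) (Fin m) ℝ :=
  Matrix.of fun a b => fderiv ℝ (fun y => A y a b) x (Pi.single i 1)

/-- Smoothness (entrywise) of a matrix-valued map on `ℝⁿ`. -/
def SmoothMat (A : (Fin n → ℝ) → Matrix (Fin m) (Fin m) ℝ) : Prop :=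
  ∀ a b, ContDiff ℝ (⊤ : ℕ∞) fun y => A y a b

/-- Smoothness of a connection. -/
def Smooth (Γ : Conn n m) : Prop :=
  ∀ i, SmoothMat fun x => Γ x i

/-- Matrix commutator. -/
def comm (A B : Matrix (Fin m) (Fin m) ℝ) : Matrix (Fin m) (Fin m) ℝ :=
  A * B - B * A

/-- Curvature `F_{ij} = ∂ᵢΓⱼ − ∂ⱼΓᵢ + [Γᵢ, Γⱼ]`. -/
def curv (Γ : Conn n m) (i j : Fin n) (x : Fin n → ℝ) :
    Matrix (Fin m) (Fin m) ℝ :=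
  pder i (fun y => Γ y j) x - pder j (fun y => Γ y i) x + comm (Γ x i) (Γ x j)

/-- Covariant derivative `∇ᵢA = ∂ᵢA + [Γᵢ, A]`. -/
def covDer (Γ : Conn n m) (i : Fin n)
    (A : (Fin n → ℝ) → Matrix (Fin m) (Fin m) ℝ) (x : Fin n → ℝ) :
    Matrix (Fin m) (Fin m) ℝ :=
  pder i A x + comm (Γ x i) (A x)

/-- `(D*F)ₖ = −Σᵢ ∇ᵢF_{ik}`. -/
def dstarF (Γ : Conn n m) (k : Fin n) (x : Fin n → ℝ) :
    Matrix (Fin m) (Fin m) ℝ :=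
  - ∑ i, covDer Γ i (fun y => curv Γ i k y) x

/-- Squared Frobenius norm of a matrix. -/
def frobSq (A : Matrix (Fin m) (Fin m) ℝ) : ℝ := ∑ a, ∑ b, (A a b) ^ 2

/-- Frobenius norm of a matrix. -/
def frobNorm (A : Matrix (Fin m) (Fin m) ℝ) : ℝ := Real.sqrt (frobSq A)

/-- Frobenius inner product `⟨A, B⟩ = tr(A Bᵀ)`. -/
def frobInner (A B : Matrix (Fin m) (Fin m) ℝ) : ℝ := ∑ a, ∑ b, A a b * B a b

/-- `|F(x)|² = Σ_{i,j} ‖F_{ij}(x)‖²` (Frobenius norms). -/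
def normSqF (Γ : Conn n m) (x : Fin n → ℝ) : ℝ :=
  ∑ i, ∑ j, frobSq (curv Γ i j x)

/-- `|F(x)|`. -/
def normF (Γ : Conn n m) (x : Fin n → ℝ) : ℝ := Real.sqrt (normSqF Γ x)

/-- Euclidean norm on `ℝⁿ`. -/
def enorm (x : Fin n → ℝ) : ℝ := Real.sqrt (∑ i, x i ^ 2)

/-- Metric compatibility: all coefficient matrices are skew-symmetric. -/
def MetricCompat (Γ : Conn n m) : Prop :=
  ∀ x i, (Γ x i)ᵀ = -(Γ x i)

/-- `(x₀,t₀)`-soliton: `Σᵢ ∇ᵢF_{ik} = (1/(2t₀)) Σᵢ (x−x₀)ᵢ F_{ik}`. -/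
def IsSolitonAt (Γ : Conn n m) (x₀ : Fin n → ℝ) (t₀ : ℝ) : Prop :=
  ∀ (x : Fin n → ℝ) (k : Fin n),
    ∑ i, covDer Γ i (fun y => curv Γ i k y) x
      = (1 / (2 * t₀)) • ∑ i, (x i - x₀ i) • curv Γ i k x

/-- `(0,1)`-soliton. -/
def IsSoliton (Γ : Conn n m) : Prop := IsSolitonAt Γ 0 1

/-- The `ℱ`-functional
`ℱ_{x₀,t₀}(Γ) = t₀² (4πt₀)^{−n/2} ∫ |F|² e^{−|x−x₀|²/(4t₀)}`. -/
def Ffunc (Γ : Conn n m) (x₀ : Fin n → ℝ) (t₀ : ℝ) : ℝ :=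
  t₀ ^ 2 * (4 * π * t₀) ^ (-(n : ℝ) / 2) *
    ∫ x : Fin n → ℝ,
      normSqF Γ x * Real.exp (-(∑ i, (x i - x₀ i) ^ 2) / (4 * t₀))

/-- The entropy `λ(Γ) = sup_{x₀, t₀>0} ℱ_{x₀,t₀}(Γ)`, valued in `[0,∞]`. -/
def entropy (Γ : Conn n m) : ℝ≥0∞ :=
  ⨆ (x₀ : Fin n → ℝ) (t₀ : ℝ) (_ : 0 < t₀), ENNReal.ofReal (Ffunc Γ x₀ t₀)

/-- Polynomial curvature growth: `|F(x)| ≤ p(|x|)`. -/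
def PolyCurvGrowth (Γ : Conn n m) : Prop :=
  ∃ p : Polynomial ℝ, ∀ x, normF Γ x ≤ p.eval (enorm x)

/-- Polynomial curvature growth to order two. -/
def PolyCurvGrowth2 (Γ : Conn n m) : Prop :=
  ∃ p : Polynomial ℝ, ∀ x,
    normF Γ x
      + (∑ i, ∑ j, ∑ k, frobNorm (covDer Γ i (fun y => curv Γ j k y) x))
      + (∑ i, ∑ j, ∑ k, ∑ l,
          frobNorm (covDer Γ i
            (fun y => covDer Γ j (fun z => curv Γ k l z) y) x))
      ≤ p.eval (enorm x)

/-- Cylindrical: some nonzero constant vector `V` satisfies `V ⌟ F ≡ 0`. -/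
def Cylindrical (Γ : Conn n m) : Prop :=
  ∃ V : Fin n → ℝ, V ≠ 0 ∧
    ∀ (x : Fin n → ℝ) (k : Fin n), ∑ i, V i • curv Γ i k x = 0

/-- `(DB)_{ij} = ∇ᵢBⱼ − ∇ⱼBᵢ`. -/
def Dop (Γ B : Conn n m) (i j : Fin n) (x : Fin n → ℝ) :
    Matrix (Fin m) (Fin m) ℝ :=
  covDer Γ i (fun y => B y j) x - covDer Γ j (fun y => B y i) x

/-- The second variation operator
`(L_{x₀,t₀}B)ₖ = −Σᵢ∇ᵢ(DB)_{ik} + (1/(2t₀))Σᵢ(x−x₀)ᵢ(DB)_{ik} + Σᵢ[Bᵢ,F_{ik}]`. -/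
def Lop (Γ B : Conn n m) (x₀ : Fin n → ℝ) (t₀ : ℝ) (k : Fin n)
    (x : Fin n → ℝ) : Matrix (Fin m) (Fin m) ℝ :=
  (- ∑ i, covDer Γ i (fun y => Dop Γ B i k y) x)
    + (1 / (2 * t₀)) • ∑ i, (x i - x₀ i) • Dop Γ B i k x
    + ∑ i, comm (B x i) (curv Γ i k x)

/-- The Gaussian weight `G(x) = (4π)^{−n/2} e^{−|x|²/4}`. -/
def gaussG (n : ℕ) (x : Fin n → ℝ) : ℝ :=
  (4 * π) ^ (-(n : ℝ) / 2) * Real.exp (-(∑ i, x i ^ 2) / 4)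

/-- The second variation form `Q(σ,V,B)` of a `(0,1)`-soliton. -/
def Q (Γ : Conn n m) (σ : ℝ) (V : Fin n → ℝ) (B : Conn n m) : ℝ :=
  -4 * σ ^ 2 * (∫ x : Fin n → ℝ, (∑ k, frobSq (dstarF Γ k x)) * gaussG n x)
    - 2 * (∫ x : Fin n → ℝ,
        (∑ k, frobSq (∑ i, V i • curv Γ i k x)) * gaussG n x)
    + 4 * (∫ x : Fin n → ℝ,
        (∑ k, frobInner (B x k) (Lop Γ B 0 1 k x)) * gaussG n x)
    - 4 * (∫ x : Fin n → ℝ,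
        (∑ k, frobInner (B x k)
          (∑ i, (σ * x i + V i) • curv Γ i k x)) * gaussG n x)

/-- Skew-symmetric-matrix-valued 1-form. -/
def SkewVals (B : Conn n m) : Prop := ∀ x i, (B x i)ᵀ = -(B x i)

/-- `ℱ`-instability. -/
def FUnstable (Γ : Conn n m) : Prop :=
  ∃ B : Conn n m, Smooth B ∧ HasCompactSupport B ∧ SkewVals B ∧
    ∀ (σ : ℝ) (V : Fin n → ℝ), Q Γ σ V B < 0

/-- Joint smoothness (entrywise) of a one-parameter family of connections on a
time set `S`. -/
def SmoothFamilyOn (Γt : ℝ → Conn n m) (S : Set ℝ) : Prop :=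
  ∀ (k : Fin n) (a b : Fin m),
    ContDiffOn ℝ (⊤ : ℕ∞) (fun p : ℝ × (Fin n → ℝ) => Γt p.1 p.2 k a b)
      (S ×ˢ (Set.univ : Set (Fin n → ℝ)))

/-- Yang–Mills flow: `∂ₜ(Γ_t)ₖ = Σᵢ ∇ᵢ(F_t)_{ik}` on a time set `S`. -/
def YMFlowOn (Γt : ℝ → Conn n m) (S : Set ℝ) : Prop :=
  ∀ t ∈ S, ∀ (x : Fin n → ℝ) (k : Fin n) (a b : Fin m),
    HasDerivWithinAt (fun t' => Γt t' x k a b)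
      ((∑ i, covDer (Γt t) i (fun y => curv (Γt t) i k y) x) a b) S t

/-- Locally uniform in time polynomial curvature growth to order two. -/
def PolyCurvGrowth2On (Γt : ℝ → Conn n m) (S : Set ℝ) : Prop :=
  ∀ J : Set ℝ, IsCompact J → J ⊆ S →
    ∃ p : Polynomial ℝ, ∀ t ∈ J, ∀ x,
      normF (Γt t) x
        + (∑ i, ∑ j, ∑ k,
            frobNorm (covDer (Γt t) i (fun y => curv (Γt t) j k y) x))
        + (∑ i, ∑ j, ∑ k, ∑ l,
            frobNorm (covDer (Γt t) i
              (fun y => covDer (Γt t) j (fun z => curv (Γt t) k l z) y) x))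
        ≤ p.eval (enorm x)

end YM

/-! The stress–energy tensor `T_{ij} = Σₖ ⟨F_{ik}, F_{jk}⟩ − ¼ δ_{ij} |F|²` has, by the Bianchi
identity, divergence `Σⱼ ∂ⱼT_{ij} = Σₖ ⟨F_{ik}, Σⱼ ∇ⱼF_{jk}⟩`. On a soliton the right-hand side is
`Σⱼ (x−x₀)ⱼ/(2t₀) (T_{ij} + ¼ δ_{ij} |F|²)`, so the Gaussian-weighted divergence of `T` reduces to
`(x−x₀)ᵢ/(8t₀) |F|²`. The divergence theorem for the fields `Σᵢ Vᵢ T_{ij}` then yields (a) for the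
dilation field `V = x − x₀`, through `tr T = (1 − n/4) |F|²`, and (b) for the translation field
`V = e_γ`. -/

namespace YM

variable {n m : ℕ}

section DivergenceTheorem

open scoped Topology

variable {ι E F : Type*} [NormedAddCommGroup E] [NormedSpace ℝ E]
  [MeasurableSpace E] {μ : Measure E}
  [NormedAddCommGroup F] [NormedSpace ℝ F]

variable [Fintype ι] {v : ι → E} {X : ι → E → F}

lemma tendsto_integral_sum_fderiv_comp_smul_smul {χ : E → ℝ} {C : ℝ}
    (hC : ∀ x, ‖fderiv ℝ χ x‖ ≤ C) (hX : ∀ i, Integrable (X i) μ) :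
    Tendsto (fun c : ℝ ↦ ∫ x, ∑ i, fderiv ℝ (fun y ↦ χ (c • y)) x (v i) • X i x ∂μ)
      (𝓝 0) (𝓝 0) := by
  set K : ℝ := ∫ x, ∑ i, C * ‖v i‖ * ‖X i x‖ ∂μ with hK
  have hbound (c : ℝ) :
      ‖∫ x, ∑ i, fderiv ℝ (fun y ↦ χ (c • y)) x (v i) • X i x ∂μ‖ ≤ |c| * K := by
    rw [hK, ← integral_const_mul]
    refine norm_integral_le_of_norm_le
      ((integrable_finsetSum _ fun i _ ↦ (hX i).norm.const_mul _).const_mul _)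
      (ae_of_all _ fun x ↦ (norm_sum_le _ _).trans ?_)
    rw [Finset.mul_sum]
    gcongr with i
    rw [fderiv_comp_smul, norm_smul, _root_.smul_apply, norm_smul, Real.norm_eq_abs,
      mul_assoc |c|]
    gcongr
    exact (fderiv ℝ χ (c • x)).le_of_opNorm_le (hC _) _
  refine squeeze_zero_norm hbound ?_
  simpa using (continuous_abs.tendsto (0 : ℝ)).mul_const K

variable [BorelSpace E]

lemma tendsto_integral_comp_smul_smul [SecondCountableTopology E] {χ : E → ℝ} (hχ : Continuous χ)
    {C : ℝ} (hC : ∀ x, ‖χ x‖ ≤ C) {f : E → F} (hf : Integrable f μ) :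
    Tendsto (fun c : ℝ ↦ ∫ x, χ (c • x) • f x ∂μ) (𝓝 0) (𝓝 (∫ x, χ 0 • f x ∂μ)) := by
  refine tendsto_integral_filter_of_dominated_convergence (fun x ↦ C * ‖f x‖)
    (Eventually.of_forall fun c ↦ ?_) (Eventually.of_forall fun c ↦ ae_of_all _ fun x ↦ ?_)
    (hf.norm.const_mul C) (ae_of_all _ fun x ↦ ?_)
  · exact (hχ.comp (continuous_const_smul c)).aestronglyMeasurable.smul hf.aestronglyMeasurable
  · rw [norm_smul]
    gcongr
    exact hC _
  · have h : Continuous fun c : ℝ ↦ χ (c • x) • f x := by fun_prop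
    simpa using h.tendsto 0

variable [FiniteDimensional ℝ E] [μ.IsAddHaarMeasure]

lemma integral_smul_sum_fderiv_eq_neg {χ : E → ℝ} (hχ : ContDiff ℝ 1 χ)
    (hχc : HasCompactSupport χ) (hX : ∀ i, ContDiff ℝ 1 (X i)) :
    ∫ x, χ x • ∑ i, fderiv ℝ (X i) x (v i) ∂μ = -∫ x, ∑ i, fderiv ℝ χ x (v i) • X i x ∂μ := by
  have hχ' (i : ι) : Continuous fun x ↦ fderiv ℝ χ x (v i) :=
    (hχ.continuous_fderiv one_ne_zero).clm_apply continuous_const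
  have hX' (i : ι) : Continuous fun x ↦ fderiv ℝ (X i) x (v i) :=
    ((hX i).continuous_fderiv one_ne_zero).clm_apply continuous_const
  have hχX' (i : ι) : Integrable (fun x ↦ χ x • fderiv ℝ (X i) x (v i)) μ :=
    (hχ.continuous.smul (hX' i)).integrable_of_hasCompactSupport hχc.smul_right
  have hχ'X (i : ι) : Integrable (fun x ↦ fderiv ℝ χ x (v i) • X i x) μ :=
    ((hχ' i).smul (hX i).continuous).integrable_of_hasCompactSupport
      (hχc.fderiv_apply ℝ (v i)).smul_right
  have hχX (i : ι) : Integrable (fun x ↦ χ x • X i x) μ :=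
    (hχ.continuous.smul (hX i).continuous).integrable_of_hasCompactSupport hχc.smul_right
  simp_rw [Finset.smul_sum]
  rw [integral_finsetSum _ fun i _ ↦ hχX' i, integral_finsetSum _ fun i _ ↦ hχ'X i,
    ← Finset.sum_neg_distrib]
  exact Finset.sum_congr rfl fun i _ ↦
    integral_smul_fderiv_eq_neg_fderiv_smul_of_integrable (hχ'X i) (hχX' i) (hχX i)
      (fun x _ ↦ hχ.differentiable one_ne_zero x)
      (fun x _ ↦ (hX i).differentiable one_ne_zero x)

/- Only the sum of the derivatives is assumed integrable, so the summands cannot be integrated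
separately; cutting off by `χ (c • x)` leaves an error `O(c)` as `c → 0`. -/
theorem integral_sum_fderiv_eq_zero (hX : ∀ i, ContDiff ℝ 1 (X i))
    (hXint : ∀ i, Integrable (X i) μ)
    (hdiv : Integrable (fun x ↦ ∑ i, fderiv ℝ (X i) x (v i)) μ) :
    ∫ x, ∑ i, fderiv ℝ (X i) x (v i) ∂μ = 0 := by
  let χ : ContDiffBump (0 : E) := ⟨1, 2, one_pos, one_lt_two⟩
  have hχ : ContDiff ℝ 1 χ := χ.contDiff
  have hχ_zero : χ 0 = 1 := χ.one_of_mem_closedBall (by simp [χ])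
  obtain ⟨C, hC⟩ := χ.hasCompactSupport.exists_bound_of_continuous hχ.continuous
  obtain ⟨C', hC'⟩ := (χ.hasCompactSupport.fderiv ℝ).exists_bound_of_continuous
    (hχ.continuous_fderiv one_ne_zero)
  have hmain := (tendsto_integral_comp_smul_smul hχ.continuous hC hdiv).mono_left
    (nhdsWithin_le_nhds (s := {0}ᶜ))
  have herror := ((tendsto_integral_sum_fderiv_comp_smul_smul (v := v) hC' hXint).mono_left
    (nhdsWithin_le_nhds (s := {0}ᶜ))).neg
  simp only [hχ_zero, one_smul, neg_zero] at hmain herror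
  refine tendsto_nhds_unique hmain (herror.congr' ?_)
  filter_upwards [self_mem_nhdsWithin] with c hc
  exact (integral_smul_sum_fderiv_eq_neg (hχ.comp (contDiff_const_smul c))
    (χ.hasCompactSupport.comp_smul hc) hX).symm

end DivergenceTheorem

section GaussianWeight

/-- The unnormalised Gaussian `e^{−|x−x₀|²/(4t)}` on `ℝⁿ`, the density of the `ℱ`-functional.
Division by zero makes it the constant `1` at `t = 0`. -/
def gaussWeight (x₀ : Fin n → ℝ) (t : ℝ) (x : Fin n → ℝ) : ℝ :=
  Real.exp (-(∑ i, (x i - x₀ i) ^ 2) / (4 * t))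

variable {x₀ : Fin n → ℝ} {t : ℝ}

lemma gaussWeight_pos (x : Fin n → ℝ) : 0 < gaussWeight x₀ t x := Real.exp_pos _

lemma contDiff_gaussWeight {k : WithTop ℕ∞} : ContDiff ℝ k (gaussWeight x₀ t) := by
  unfold gaussWeight
  fun_prop

lemma fderiv_gaussWeight_single (x : Fin n → ℝ) (j : Fin n) :
    fderiv ℝ (gaussWeight x₀ t) x (Pi.single j 1)
      = -((x j - x₀ j) / (2 * t)) * gaussWeight x₀ t x := by
  have hcoord (i : Fin n) : HasFDerivAt (fun y : Fin n → ℝ ↦ y i - x₀ i)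
      (ContinuousLinearMap.proj (R := ℝ) i) x := (hasFDerivAt_apply i x).sub_const (x₀ i)
  have h : HasFDerivAt (gaussWeight x₀ t) _ x := ((HasFDerivAt.fun_sum (u := Finset.univ)
    fun i _ ↦ (hcoord i).pow 2).fun_neg.mul_const (4 * t)⁻¹).exp
  rw [h.fderiv]
  simp only [gaussWeight, nsmul_eq_mul, smul_neg, _root_.neg_apply, _root_.smul_apply,
    _root_.sum_apply, ContinuousLinearMap.proj_apply, Pi.single_apply, smul_eq_mul, mul_ite,
    mul_one, mul_zero, Finset.sum_ite_eq', Finset.mem_univ, if_true, div_eq_mul_inv]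
  ring

lemma integrable_gaussWeight (ht : 0 < t) : Integrable (gaussWeight x₀ t) := by
  have hfactor (i : Fin n) : Integrable fun s : ℝ ↦ Real.exp (-(1 / (4 * t)) * (s - x₀ i) ^ 2) :=
    (integrable_exp_neg_mul_sq (by positivity)).comp_sub_right (x₀ i)
  refine (Integrable.fintype_prod hfactor).congr (ae_of_all _ fun x ↦ ?_)
  simp only [gaussWeight, ← Real.exp_sum, ← Finset.mul_sum]
  ring_nf

lemma enorm_nonneg (x : Fin n → ℝ) : 0 ≤ enorm x := Real.sqrt_nonneg _

lemma enorm_sq (x : Fin n → ℝ) : enorm x ^ 2 = ∑ i, x i ^ 2 :=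
  Real.sq_sqrt (Finset.sum_nonneg fun _ _ ↦ sq_nonneg _)

lemma continuous_enorm : Continuous (enorm : (Fin n → ℝ) → ℝ) := by
  unfold enorm
  fun_prop

lemma enorm_add_le (x y : Fin n → ℝ) : enorm (x + y) ≤ enorm x + enorm y := by
  have h (z : Fin n → ℝ) : enorm z = ‖WithLp.toLp 2 z‖ := by simp [enorm, EuclideanSpace.norm_eq]
  simpa only [h, WithLp.toLp_add] using norm_add_le (WithLp.toLp 2 x) (WithLp.toLp 2 y)

lemma enorm_pow_mul_gaussWeight_le (ht : 0 < t) (k : ℕ) (x : Fin n → ℝ) :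
    enorm x ^ k * gaussWeight x₀ t x
      ≤ k.factorial * Real.exp (2 * t + enorm x₀) * gaussWeight x₀ (2 * t) x := by
  have htri : enorm x ≤ enorm (x - x₀) + enorm x₀ := by simpa using enorm_add_le (x - x₀) x₀
  have hyoung : enorm (x - x₀) ≤ 2 * t + enorm (x - x₀) ^ 2 / (8 * t) := by
    have : 0 ≤ (enorm (x - x₀) - 4 * t) ^ 2 / (8 * t) := by positivity
    have e : (enorm (x - x₀) - 4 * t) ^ 2 / (8 * t)
      = 2 * t + enorm (x - x₀) ^ 2 / (8 * t) - enorm (x - x₀) := by field_simp; ring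
    linarith
  have hpow : enorm x ^ k ≤ k.factorial * Real.exp (enorm x) :=
    (div_le_iff₀' (by positivity)).1 (Real.pow_div_factorial_le_exp _ (enorm_nonneg x) k)
  have hweight (s : ℝ) : gaussWeight x₀ s x = Real.exp (-enorm (x - x₀) ^ 2 / (4 * s)) := by
    simp [gaussWeight, enorm_sq]
  calc enorm x ^ k * gaussWeight x₀ t x
      ≤ k.factorial * Real.exp (enorm x) * gaussWeight x₀ t x :=
        mul_le_mul_of_nonneg_right hpow (gaussWeight_pos x).le
    _ = k.factorial * Real.exp (enorm x + -enorm (x - x₀) ^ 2 / (4 * t)) := by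
        rw [Real.exp_add, hweight, mul_assoc]
    _ ≤ k.factorial * Real.exp (2 * t + enorm x₀ + -enorm (x - x₀) ^ 2 / (4 * (2 * t))) := by
        gcongr _ * Real.exp ?_
        have e : -enorm (x - x₀) ^ 2 / (4 * t)
          = -enorm (x - x₀) ^ 2 / (4 * (2 * t)) - enorm (x - x₀) ^ 2 / (8 * t) := by
          field_simp; ring
        linarith
    _ = k.factorial * Real.exp (2 * t + enorm x₀) * gaussWeight x₀ (2 * t) x := by
        rw [Real.exp_add, hweight, mul_assoc]

lemma integrable_eval_enorm_mul_gaussWeight (ht : 0 < t) (p : Polynomial ℝ) :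
    Integrable fun x ↦ p.eval (enorm x) * gaussWeight x₀ t x := by
  have hcont : Continuous fun x ↦ gaussWeight x₀ t x := contDiff_gaussWeight (k := 0).continuous
  have hpow (k : ℕ) : Integrable fun x ↦ enorm x ^ k * gaussWeight x₀ t x := by
    refine ((integrable_gaussWeight (x₀ := x₀) (mul_pos two_pos ht)).const_mul
      (k.factorial * Real.exp (2 * t + enorm x₀))).mono'
      ((continuous_enorm.pow k).mul hcont).aestronglyMeasurable (ae_of_all _ fun x ↦ ?_)
    rw [Real.norm_of_nonneg (mul_nonneg (pow_nonneg (enorm_nonneg x) k) (gaussWeight_pos x).le)]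
    exact enorm_pow_mul_gaussWeight_le ht k x
  simp only [Polynomial.eval_eq_sum_range, Finset.sum_mul, mul_assoc]
  exact integrable_finsetSum _ fun k _ ↦ (hpow k).const_mul _

end GaussianWeight

section GaussianDivergence

/-- The divergence `div X − ⟨x − x₀, X⟩ / (2t)` of the vector field with components `Xⱼ`, which is
minus the adjoint of the gradient for the Gaussian weight. -/
def gaussDiv (x₀ : Fin n → ℝ) (t : ℝ) (X : Fin n → (Fin n → ℝ) → ℝ) (x : Fin n → ℝ) : ℝ :=
  ∑ j, (fderiv ℝ (X j) x (Pi.single j 1) - (x j - x₀ j) / (2 * t) * X j x)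

variable {x₀ : Fin n → ℝ} {t : ℝ}

lemma sum_fderiv_mul_gaussWeight {X : Fin n → (Fin n → ℝ) → ℝ} {x : Fin n → ℝ}
    (hX : ∀ j, DifferentiableAt ℝ (X j) x) :
    ∑ j, fderiv ℝ (fun y ↦ X j y * gaussWeight x₀ t y) x (Pi.single j 1)
      = gaussDiv x₀ t X x * gaussWeight x₀ t x := by
  have hw : DifferentiableAt ℝ (gaussWeight x₀ t) x :=
    contDiff_gaussWeight.differentiable one_ne_zero x
  simp only [gaussDiv, Finset.sum_mul, fderiv_fun_mul (hX _) hw, _root_.add_apply,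
    _root_.smul_apply, smul_eq_mul, fderiv_gaussWeight_single]
  exact Finset.sum_congr rfl fun j _ ↦ by ring

theorem integral_gaussDiv_mul_gaussWeight {X : Fin n → (Fin n → ℝ) → ℝ}
    (hX : ∀ j, ContDiff ℝ 1 (X j)) (hint : ∀ j, Integrable fun x ↦ X j x * gaussWeight x₀ t x)
    (hdiv : Integrable fun x ↦ gaussDiv x₀ t X x * gaussWeight x₀ t x) :
    ∫ x, gaussDiv x₀ t X x * gaussWeight x₀ t x = 0 := by
  simp only [← sum_fderiv_mul_gaussWeight fun j ↦ (hX j).differentiable one_ne_zero _] at hdiv ⊢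
  exact integral_sum_fderiv_eq_zero (fun j ↦ (hX j).mul contDiff_gaussWeight) hint hdiv

lemma gaussDiv_sum_mul {ι : Type*} [Fintype ι] {V : ι → (Fin n → ℝ) → ℝ}
    {T : ι → Fin n → (Fin n → ℝ) → ℝ} {x : Fin n → ℝ}
    (hV : ∀ i, DifferentiableAt ℝ (V i) x) (hT : ∀ i j, DifferentiableAt ℝ (T i j) x) :
    gaussDiv x₀ t (fun j y ↦ ∑ i, V i y * T i j y) x
      = ∑ i, (∑ j, fderiv ℝ (V i) x (Pi.single j 1) * T i j x + V i x * gaussDiv x₀ t (T i) x) := by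
  have hfderiv (j : Fin n) : fderiv ℝ (fun y ↦ ∑ i, V i y * T i j y) x (Pi.single j 1)
      = ∑ i, (fderiv ℝ (V i) x (Pi.single j 1) * T i j x
        + V i x * fderiv ℝ (T i j) x (Pi.single j 1)) := by
    rw [fderiv_fun_sum fun i _ ↦ (hV i).fun_mul (hT i j)]
    simp only [fderiv_fun_mul (hV _) (hT _ _), _root_.sum_apply, _root_.add_apply,
      _root_.smul_apply, smul_eq_mul]
    exact Finset.sum_congr rfl fun i _ ↦ by ring
  simp only [gaussDiv, hfderiv, Finset.mul_sum, ← Finset.sum_sub_distrib, ← Finset.sum_add_distrib]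
  rw [Finset.sum_comm]
  exact Finset.sum_congr rfl fun i _ ↦ Finset.sum_congr rfl fun j _ ↦ by ring

end GaussianDivergence

section MatrixFields

variable {A B : (Fin n → ℝ) → Matrix (Fin m) (Fin m) ℝ}

lemma SmoothMat.differentiableAt (hA : SmoothMat A) (a b : Fin m) (x : Fin n → ℝ) :
    DifferentiableAt ℝ (fun y ↦ A y a b) x :=
  (hA a b).differentiable (by simp) x

lemma SmoothMat.pder (hA : SmoothMat A) (i : Fin n) : SmoothMat (YM.pder i A) := fun a b ↦
  ((hA a b).fderiv_right (m := (⊤ : ℕ∞)) (by simp)).clm_apply contDiff_const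

lemma SmoothMat.add (hA : SmoothMat A) (hB : SmoothMat B) : SmoothMat fun x ↦ A x + B x :=
  fun a b ↦ (hA a b).add (hB a b)

lemma SmoothMat.sub (hA : SmoothMat A) (hB : SmoothMat B) : SmoothMat fun x ↦ A x - B x :=
  fun a b ↦ (hA a b).sub (hB a b)

lemma SmoothMat.mul (hA : SmoothMat A) (hB : SmoothMat B) : SmoothMat fun x ↦ A x * B x := by
  intro a b
  simp only [Matrix.mul_apply]
  exact ContDiff.sum fun k _ ↦ (hA a k).mul (hB k b)

lemma SmoothMat.comm (hA : SmoothMat A) (hB : SmoothMat B) :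
    SmoothMat fun x ↦ YM.comm (A x) (B x) :=
  (hA.mul hB).sub (hB.mul hA)

lemma SmoothMat.contDiff_frobInner (hA : SmoothMat A) (hB : SmoothMat B) :
    ContDiff ℝ (⊤ : ℕ∞) fun x ↦ frobInner (A x) (B x) :=
  ContDiff.sum fun a _ ↦ ContDiff.sum fun b _ ↦ (hA a b).mul (hB a b)

lemma pder_add (hA : SmoothMat A) (hB : SmoothMat B) (i : Fin n) (x : Fin n → ℝ) :
    pder i (fun y ↦ A y + B y) x = pder i A x + pder i B x := by
  ext a b
  simp [pder, fderiv_fun_add (hA.differentiableAt a b x) (hB.differentiableAt a b x)]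

lemma pder_neg (A : (Fin n → ℝ) → Matrix (Fin m) (Fin m) ℝ) (i : Fin n) (x : Fin n → ℝ) :
    pder i (fun y ↦ -A y) x = -pder i A x := by
  ext a b
  simp [pder]

lemma pder_sub (hA : SmoothMat A) (hB : SmoothMat B) (i : Fin n) (x : Fin n → ℝ) :
    pder i (fun y ↦ A y - B y) x = pder i A x - pder i B x := by
  ext a b
  simp [pder, fderiv_fun_sub (hA.differentiableAt a b x) (hB.differentiableAt a b x)]

lemma pder_mul (hA : SmoothMat A) (hB : SmoothMat B) (i : Fin n) (x : Fin n → ℝ) :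
    pder i (fun y ↦ A y * B y) x = pder i A x * B x + A x * pder i B x := by
  ext a b
  have hA' (k : Fin m) := hA.differentiableAt a k x
  have hB' (k : Fin m) := hB.differentiableAt k b x
  simp only [pder, Matrix.of_apply, Matrix.mul_apply, Matrix.add_apply,
    fderiv_fun_sum fun k _ ↦ (hA' k).fun_mul (hB' k), _root_.sum_apply,
    fderiv_fun_mul (hA' _) (hB' _), _root_.add_apply, _root_.smul_apply, smul_eq_mul,
    ← Finset.sum_add_distrib]
  exact Finset.sum_congr rfl fun k _ ↦ by ring

lemma pder_comm (hA : SmoothMat A) (hB : SmoothMat B) (i : Fin n) (x : Fin n → ℝ) :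
    pder i (fun y ↦ comm (A y) (B y)) x = comm (pder i A x) (B x) + comm (A x) (pder i B x) := by
  simp only [comm, pder_sub (hA.mul hB) (hB.mul hA), pder_mul hA hB, pder_mul hB hA]
  abel

lemma pder_pder_comm (hA : SmoothMat A) (i j : Fin n) (x : Fin n → ℝ) :
    pder i (pder j A) x = pder j (pder i A) x := by
  ext a b
  have hdiff : DifferentiableAt ℝ (fderiv ℝ fun y ↦ A y a b) x :=
    ((hA a b).fderiv_right (m := (⊤ : ℕ∞)) (by simp)).differentiable (by simp) x
  have hsymm : IsSymmSndFDerivAt ℝ (fun y ↦ A y a b) x :=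
    (hA a b).contDiffAt.isSymmSndFDerivAt (by
      simpa using WithTop.coe_le_coe.2 (le_top : (2 : ℕ∞) ≤ ⊤))
  simp only [pder, Matrix.of_apply]
  rw [fderiv_clm_apply hdiff (by fun_prop), fderiv_clm_apply hdiff (by fun_prop)]
  simpa using hsymm _ _

end MatrixFields

section FrobeniusInner

lemma frobInner_eq_trace (A B : Matrix (Fin m) (Fin m) ℝ) : frobInner A B = (Aᵀ * B).trace := by
  simp only [frobInner, Matrix.trace, Matrix.diag, Matrix.mul_apply, Matrix.transpose_apply]
  exact Finset.sum_comm

lemma frobInner_self (A : Matrix (Fin m) (Fin m) ℝ) : frobInner A A = frobSq A := by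
  simp only [frobInner, frobSq, sq]

lemma frobInner_comm (A B : Matrix (Fin m) (Fin m) ℝ) : frobInner A B = frobInner B A := by
  simp only [frobInner, mul_comm]

lemma frobInner_add_left (A B C : Matrix (Fin m) (Fin m) ℝ) :
    frobInner (A + B) C = frobInner A C + frobInner B C := by
  simp only [frobInner_eq_trace, Matrix.transpose_add, add_mul, Matrix.trace_add]

lemma frobInner_add_right (A B C : Matrix (Fin m) (Fin m) ℝ) :
    frobInner A (B + C) = frobInner A B + frobInner A C := by
  simp only [frobInner_eq_trace, mul_add, Matrix.trace_add]

lemma frobInner_neg_left (A B : Matrix (Fin m) (Fin m) ℝ) :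
    frobInner (-A) B = -frobInner A B := by
  simp only [frobInner_eq_trace, Matrix.transpose_neg, neg_mul, Matrix.trace_neg]

lemma frobInner_neg_right (A B : Matrix (Fin m) (Fin m) ℝ) :
    frobInner A (-B) = -frobInner A B := by
  simp only [frobInner_eq_trace, mul_neg, Matrix.trace_neg]

lemma frobInner_smul_right (c : ℝ) (A B : Matrix (Fin m) (Fin m) ℝ) :
    frobInner A (c • B) = c * frobInner A B := by
  simp only [frobInner_eq_trace, mul_smul_comm, Matrix.trace_smul, smul_eq_mul]

lemma frobInner_sum_right {ι : Type*} (s : Finset ι) (A : Matrix (Fin m) (Fin m) ℝ)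
    (B : ι → Matrix (Fin m) (Fin m) ℝ) :
    frobInner A (∑ i ∈ s, B i) = ∑ i ∈ s, frobInner A (B i) := by
  simp only [frobInner_eq_trace, Finset.mul_sum, Matrix.trace_sum]

lemma frobSq_nonneg (A : Matrix (Fin m) (Fin m) ℝ) : 0 ≤ frobSq A :=
  Finset.sum_nonneg fun _ _ ↦ Finset.sum_nonneg fun _ _ ↦ sq_nonneg _

lemma abs_frobInner_le (A B : Matrix (Fin m) (Fin m) ℝ) :
    |frobInner A B| ≤ (frobSq A + frobSq B) / 2 := by
  simp only [frobInner, frobSq, ← Finset.sum_add_distrib, Finset.sum_div]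
  refine (Finset.abs_sum_le_sum_abs _ _).trans (Finset.sum_le_sum fun a _ ↦ ?_)
  refine (Finset.abs_sum_le_sum_abs _ _).trans (Finset.sum_le_sum fun b _ ↦ ?_)
  rw [abs_mul]
  linarith [two_mul_le_add_sq |A a b| |B a b|, sq_abs (A a b), sq_abs (B a b)]

lemma frobInner_comm_add_frobInner_comm {S : Matrix (Fin m) (Fin m) ℝ} (hS : Sᵀ = -S)
    (A B : Matrix (Fin m) (Fin m) ℝ) :
    frobInner (comm S A) B + frobInner A (comm S B) = 0 := by
  have hcomm : (comm S A)ᵀ * B + Aᵀ * comm S B = S * (Aᵀ * B) - Aᵀ * B * S := by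
    rw [comm, comm, Matrix.transpose_sub, Matrix.transpose_mul, Matrix.transpose_mul, hS]
    noncomm_ring
  rw [frobInner_eq_trace, frobInner_eq_trace, ← Matrix.trace_add, hcomm, Matrix.trace_sub,
    Matrix.trace_mul_comm, sub_self]

lemma fderiv_frobInner {A B : (Fin n → ℝ) → Matrix (Fin m) (Fin m) ℝ} (hA : SmoothMat A)
    (hB : SmoothMat B) (x : Fin n → ℝ) (j : Fin n) :
    fderiv ℝ (fun y ↦ frobInner (A y) (B y)) x (Pi.single j 1)
      = frobInner (pder j A x) (B x) + frobInner (A x) (pder j B x) := by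
  have hA' (a b : Fin m) := hA.differentiableAt a b x
  have hB' (a b : Fin m) := hB.differentiableAt a b x
  simp only [frobInner, pder, Matrix.of_apply, ← Finset.sum_add_distrib]
  rw [fderiv_fun_sum fun a _ ↦ DifferentiableAt.fun_sum fun b _ ↦ (hA' a b).fun_mul (hB' a b),
    _root_.sum_apply]
  refine Finset.sum_congr rfl fun a _ ↦ ?_
  rw [fderiv_fun_sum fun b _ ↦ (hA' a b).fun_mul (hB' a b), _root_.sum_apply]
  refine Finset.sum_congr rfl fun b _ ↦ ?_
  rw [fderiv_fun_mul (hA' a b) (hB' a b)]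
  simp only [_root_.add_apply, _root_.smul_apply, smul_eq_mul]
  ring

end FrobeniusInner

section Curvature

variable {Γ : Conn n m} {A B : (Fin n → ℝ) → Matrix (Fin m) (Fin m) ℝ}

lemma Smooth.curv (hΓ : Smooth Γ) (i j : Fin n) : SmoothMat (YM.curv Γ i j) :=
  (((hΓ j).pder i).sub ((hΓ i).pder j)).add ((hΓ i).comm (hΓ j))

lemma curv_swap (Γ : Conn n m) (i j : Fin n) (x : Fin n → ℝ) : curv Γ j i x = -curv Γ i j x := by
  simp only [curv, comm]
  abel

lemma covDer_neg (Γ : Conn n m) (i : Fin n) (A : (Fin n → ℝ) → Matrix (Fin m) (Fin m) ℝ)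
    (x : Fin n → ℝ) : covDer Γ i (fun y ↦ -A y) x = -covDer Γ i A x := by
  simp only [covDer, comm, pder_neg]
  noncomm_ring

lemma covDer_curv_swap (Γ : Conn n m) (i j k : Fin n) (x : Fin n → ℝ) :
    covDer Γ i (curv Γ k j) x = -covDer Γ i (curv Γ j k) x := by
  rw [← covDer_neg, funext (curv_swap Γ j k)]

lemma pder_curv (hΓ : Smooth Γ) (i j k : Fin n) (x : Fin n → ℝ) :
    pder i (curv Γ j k) x =
      pder i (pder j fun y ↦ Γ y k) x - pder i (pder k fun y ↦ Γ y j) x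
        + (comm (pder i (fun y ↦ Γ y j) x) (Γ x k) + comm (Γ x j) (pder i (fun y ↦ Γ y k) x)) := by
  rw [← pder_comm (hΓ j) (hΓ k), ← pder_sub ((hΓ k).pder j) ((hΓ j).pder k),
    ← pder_add (((hΓ k).pder j).sub ((hΓ j).pder k)) ((hΓ j).comm (hΓ k))]
  rfl

theorem bianchi_identity (hΓ : Smooth Γ) (i j k : Fin n) (x : Fin n → ℝ) :
    covDer Γ i (curv Γ j k) x + covDer Γ j (curv Γ k i) x + covDer Γ k (curv Γ i j) x = 0 := by
  simp only [covDer, pder_curv hΓ]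
  rw [pder_pder_comm (hΓ k) i j, pder_pder_comm (hΓ j) i k, pder_pder_comm (hΓ i) j k]
  simp only [curv, comm]
  noncomm_ring

lemma fderiv_frobInner_eq_covDer (hΓ : MetricCompat Γ) (hA : SmoothMat A) (hB : SmoothMat B)
    (x : Fin n → ℝ) (j : Fin n) :
    fderiv ℝ (fun y ↦ frobInner (A y) (B y)) x (Pi.single j 1)
      = frobInner (covDer Γ j A x) (B x) + frobInner (A x) (covDer Γ j B x) := by
  rw [fderiv_frobInner hA hB, covDer, covDer, frobInner_add_left, frobInner_add_right]
  linarith [frobInner_comm_add_frobInner_comm (hΓ x j) (A x) (B x)]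

lemma two_mul_sum_frobInner_covDer_curv (hΓ : Smooth Γ) (i : Fin n) (x : Fin n → ℝ) :
    2 * ∑ j, ∑ k, frobInner (covDer Γ j (curv Γ i k) x) (curv Γ j k x)
      = ∑ j, ∑ k, frobInner (covDer Γ i (curv Γ j k) x) (curv Γ j k x) := by
  have hbianchi (j k : Fin n) : covDer Γ i (curv Γ j k) x
      = covDer Γ j (curv Γ i k) x + -covDer Γ k (curv Γ i j) x := by
    have h := bianchi_identity hΓ i j k x
    rw [covDer_curv_swap Γ j i k] at h
    rw [← sub_eq_zero, ← h]
    abel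
  have hswap : ∑ j, ∑ k, frobInner (covDer Γ k (curv Γ i j) x) (curv Γ k j x)
      = ∑ j, ∑ k, frobInner (covDer Γ j (curv Γ i k) x) (curv Γ j k x) := Finset.sum_comm
  rw [two_mul]
  nth_rw 2 [← hswap]
  simp only [← Finset.sum_add_distrib]
  refine Finset.sum_congr rfl fun j _ ↦ Finset.sum_congr rfl fun k _ ↦ ?_
  rw [hbianchi, frobInner_add_left, frobInner_neg_left, curv_swap Γ j k x, frobInner_neg_right]

end Curvature

section StressTensor

variable {Γ : Conn n m}

/-- The stress–energy tensor `T_{ij} = Σₖ ⟨F_{ik}, F_{jk}⟩ − ¼ δ_{ij} |F|²` of a connection. -/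
def stress (Γ : Conn n m) (i j : Fin n) (x : Fin n → ℝ) : ℝ :=
  ∑ k, frobInner (curv Γ i k x) (curv Γ j k x) - if i = j then normSqF Γ x / 4 else 0

lemma normSqF_eq_sum_frobInner (Γ : Conn n m) (x : Fin n → ℝ) :
    normSqF Γ x = ∑ i, ∑ k, frobInner (curv Γ i k x) (curv Γ i k x) := by
  simp only [normSqF, frobInner_self]

lemma normSqF_nonneg (Γ : Conn n m) (x : Fin n → ℝ) : 0 ≤ normSqF Γ x :=
  Finset.sum_nonneg fun _ _ ↦ Finset.sum_nonneg fun _ _ ↦ frobSq_nonneg _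

lemma contDiff_normSqF (hΓ : Smooth Γ) : ContDiff ℝ (⊤ : ℕ∞) (normSqF Γ) := by
  rw [funext (normSqF_eq_sum_frobInner Γ)]
  exact ContDiff.sum fun i _ ↦ ContDiff.sum fun k _ ↦
    (hΓ.curv i k).contDiff_frobInner (hΓ.curv i k)

lemma contDiff_stress (hΓ : Smooth Γ) (i j : Fin n) : ContDiff ℝ (⊤ : ℕ∞) (stress Γ i j) := by
  refine (ContDiff.sum fun k _ ↦ (hΓ.curv i k).contDiff_frobInner (hΓ.curv j k)).sub ?_
  split_ifs
  exacts [(contDiff_normSqF hΓ).div_const 4, contDiff_const]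

lemma sum_stress_self (Γ : Conn n m) (x : Fin n → ℝ) :
    ∑ i, stress Γ i i x = (1 - n / 4) * normSqF Γ x := by
  simp only [stress, if_true, Finset.sum_sub_distrib, ← normSqF_eq_sum_frobInner,
    Finset.sum_const, Finset.card_univ, Fintype.card_fin, nsmul_eq_mul]
  ring

lemma sum_frobSq_curv_le_normSqF (Γ : Conn n m) (i : Fin n) (x : Fin n → ℝ) :
    ∑ k, frobSq (curv Γ i k x) ≤ normSqF Γ x :=
  Finset.single_le_sum (f := fun i ↦ ∑ k, frobSq (curv Γ i k x))
    (fun _ _ ↦ Finset.sum_nonneg fun _ _ ↦ frobSq_nonneg _) (Finset.mem_univ i)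

lemma abs_stress_le (Γ : Conn n m) (i j : Fin n) (x : Fin n → ℝ) :
    |stress Γ i j x| ≤ 2 * normSqF Γ x := by
  have hN := normSqF_nonneg Γ x
  have hF : |∑ k, frobInner (curv Γ i k x) (curv Γ j k x)| ≤ normSqF Γ x := calc
    _ ≤ ∑ k, (frobSq (curv Γ i k x) + frobSq (curv Γ j k x)) / 2 :=
      (Finset.abs_sum_le_sum_abs _ _).trans (Finset.sum_le_sum fun k _ ↦ abs_frobInner_le _ _)
    _ = (∑ k, frobSq (curv Γ i k x) + ∑ k, frobSq (curv Γ j k x)) / 2 := by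
      rw [← Finset.sum_div, Finset.sum_add_distrib]
    _ ≤ normSqF Γ x := by
      linarith [sum_frobSq_curv_le_normSqF Γ i x, sum_frobSq_curv_le_normSqF Γ j x]
  have hδ : |if i = j then normSqF Γ x / 4 else 0| ≤ normSqF Γ x := by
    split_ifs
    · rw [abs_of_nonneg (by positivity)]
      linarith
    · simpa using hN
  exact (abs_sub _ _).trans (by linarith)

lemma fderiv_normSqF (hΓ : Smooth Γ) (hmc : MetricCompat Γ) (x : Fin n → ℝ) (i : Fin n) :
    fderiv ℝ (normSqF Γ) x (Pi.single i 1)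
      = 2 * ∑ j, ∑ k, frobInner (covDer Γ i (curv Γ j k) x) (curv Γ j k x) := by
  have hdiff (j k : Fin n) :
      DifferentiableAt ℝ (fun y ↦ frobInner (curv Γ j k y) (curv Γ j k y)) x :=
    ((hΓ.curv j k).contDiff_frobInner (hΓ.curv j k)).differentiable (by simp) x
  rw [funext (normSqF_eq_sum_frobInner Γ),
    fderiv_fun_sum fun j _ ↦ DifferentiableAt.fun_sum fun k _ ↦ hdiff j k]
  simp only [fderiv_fun_sum fun k _ ↦ hdiff _ k, _root_.sum_apply, Finset.mul_sum,
    fderiv_frobInner_eq_covDer hmc (hΓ.curv _ _) (hΓ.curv _ _),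
    frobInner_comm (curv Γ _ _ x) (covDer Γ _ _ x), two_mul]

lemma fderiv_stress (hΓ : Smooth Γ) (hmc : MetricCompat Γ) (i j : Fin n) (x : Fin n → ℝ) :
    fderiv ℝ (stress Γ i j) x (Pi.single j 1)
      = ∑ k, (frobInner (covDer Γ j (curv Γ i k) x) (curv Γ j k x)
          + frobInner (curv Γ i k x) (covDer Γ j (curv Γ j k) x))
        - if i = j then fderiv ℝ (normSqF Γ) x (Pi.single i 1) / 4 else 0 := by
  have hinner (k : Fin n) :
      DifferentiableAt ℝ (fun y ↦ frobInner (curv Γ i k y) (curv Γ j k y)) x :=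
    ((hΓ.curv i k).contDiff_frobInner (hΓ.curv j k)).differentiable (by simp) x
  have hnorm : DifferentiableAt ℝ (normSqF Γ) x := (contDiff_normSqF hΓ).differentiable (by simp) x
  have hsum : fderiv ℝ (fun y ↦ ∑ k, frobInner (curv Γ i k y) (curv Γ j k y)) x (Pi.single j 1)
      = ∑ k, (frobInner (covDer Γ j (curv Γ i k) x) (curv Γ j k x)
          + frobInner (curv Γ i k x) (covDer Γ j (curv Γ j k) x)) := by
    simp only [fderiv_fun_sum fun k _ ↦ hinner k, _root_.sum_apply,
      fderiv_frobInner_eq_covDer hmc (hΓ.curv _ _) (hΓ.curv _ _)]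
  unfold stress
  simp only [div_eq_mul_inv]
  split_ifs with hij
  · subst hij
    rw [fderiv_fun_sub (DifferentiableAt.fun_sum fun k _ ↦ hinner k) (hnorm.mul_const 4⁻¹),
      _root_.sub_apply, hsum, fderiv_mul_const hnorm, _root_.smul_apply, smul_eq_mul,
      mul_comm 4⁻¹]
  · simpa only [sub_zero] using hsum

theorem sum_fderiv_stress (hΓ : Smooth Γ) (hmc : MetricCompat Γ) (i : Fin n) (x : Fin n → ℝ) :
    ∑ j, fderiv ℝ (stress Γ i j) x (Pi.single j 1)
      = ∑ k, frobInner (curv Γ i k x) (∑ j, covDer Γ j (curv Γ j k) x) := by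
  have hdiv : ∑ j, ∑ k, frobInner (curv Γ i k x) (covDer Γ j (curv Γ j k) x)
      = ∑ k, frobInner (curv Γ i k x) (∑ j, covDer Γ j (curv Γ j k) x) := by
    simp only [frobInner_sum_right]
    exact Finset.sum_comm
  simp only [fderiv_stress hΓ hmc, Finset.sum_sub_distrib, Finset.sum_add_distrib, hdiv,
    Finset.sum_ite_eq, Finset.mem_univ, if_true, fderiv_normSqF hΓ hmc]
  linarith [two_mul_sum_frobInner_covDer_curv hΓ i x]

end StressTensor

section Soliton

variable {Γ : Conn n m} {x₀ : Fin n → ℝ} {t₀ : ℝ}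

theorem IsSolitonAt.gaussDiv_stress (hsol : IsSolitonAt Γ x₀ t₀) (hΓ : Smooth Γ)
    (hmc : MetricCompat Γ) (i : Fin n) (x : Fin n → ℝ) :
    gaussDiv x₀ t₀ (stress Γ i) x = (x i - x₀ i) / (8 * t₀) * normSqF Γ x := by
  have hcurrent : ∑ k, frobInner (curv Γ i k x) (∑ j, covDer Γ j (curv Γ j k) x)
      = ∑ j, (x j - x₀ j) / (2 * t₀) * ∑ k, frobInner (curv Γ i k x) (curv Γ j k x) := by
    have hsol' (k : Fin n) := hsol x k
    simp only [hsol', frobInner_smul_right, frobInner_sum_right, Finset.mul_sum]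
    rw [Finset.sum_comm]
    exact Finset.sum_congr rfl fun j _ ↦ Finset.sum_congr rfl fun k _ ↦ by ring
  have hδ : ∑ j, (x j - x₀ j) / (2 * t₀) * (if i = j then normSqF Γ x / 4 else 0)
      = (x i - x₀ i) / (8 * t₀) * normSqF Γ x := by
    simp only [mul_ite, mul_zero, Finset.sum_ite_eq, Finset.mem_univ, if_true]
    ring
  rw [gaussDiv, Finset.sum_sub_distrib, sum_fderiv_stress hΓ hmc, hcurrent]
  simp only [stress, mul_sub, Finset.sum_sub_distrib, hδ]
  ring

theorem IsSolitonAt.integral_sum_fderiv_mul_stress_add_eq_zero (hsol : IsSolitonAt Γ x₀ t₀)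
    (hΓ : Smooth Γ) (hmc : MetricCompat Γ) {V : Fin n → (Fin n → ℝ) → ℝ}
    (hV : ∀ i, ContDiff ℝ 1 (V i))
    (hint : ∀ i j, Integrable fun x ↦ V i x * stress Γ i j x * gaussWeight x₀ t₀ x)
    (hdiv : Integrable fun x ↦ (∑ i, (∑ j, fderiv ℝ (V i) x (Pi.single j 1) * stress Γ i j x
      + V i x * ((x i - x₀ i) / (8 * t₀) * normSqF Γ x))) * gaussWeight x₀ t₀ x) :
    ∫ x, (∑ i, (∑ j, fderiv ℝ (V i) x (Pi.single j 1) * stress Γ i j x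
      + V i x * ((x i - x₀ i) / (8 * t₀) * normSqF Γ x))) * gaussWeight x₀ t₀ x = 0 := by
  have hT (i j : Fin n) : ContDiff ℝ 1 (stress Γ i j) := (contDiff_stress hΓ i j).of_le (by simp)
  simp only [← hsol.gaussDiv_stress hΓ hmc] at hdiv ⊢
  simp only [← gaussDiv_sum_mul (fun i ↦ (hV i).differentiable one_ne_zero _)
    (fun i j ↦ (hT i j).differentiable one_ne_zero _)] at hdiv ⊢
  refine integral_gaussDiv_mul_gaussWeight
    (fun j ↦ ContDiff.sum fun i _ ↦ (hV i).mul (hT i j)) (fun j ↦ ?_) hdiv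
  simp only [Finset.sum_mul]
  exact integrable_finsetSum _ fun i _ ↦ hint i j

lemma integrable_mul_gaussWeight_of_abs_le {f g : (Fin n → ℝ) → ℝ} {C : ℝ} (hf : Continuous f)
    (hle : ∀ x, |f x| ≤ C * g x) (hg : Integrable fun x ↦ g x * gaussWeight x₀ t₀ x) :
    Integrable fun x ↦ f x * gaussWeight x₀ t₀ x := by
  refine (hg.const_mul C).mono'
    (hf.mul (contDiff_gaussWeight (k := 0)).continuous).aestronglyMeasurable
    (ae_of_all _ fun x ↦ ?_)
  rw [norm_mul, Real.norm_of_nonneg (gaussWeight_pos x).le, ← mul_assoc]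
  exact mul_le_mul_of_nonneg_right (hle x) (gaussWeight_pos x).le

lemma integrable_mul_normSqF_mul_gaussWeight (hΓ : Smooth Γ)
    (hint : Integrable fun x ↦ (1 + ∑ i, (x i - x₀ i) ^ 2) * normSqF Γ x * gaussWeight x₀ t₀ x)
    {u : (Fin n → ℝ) → ℝ} (hu : Continuous u) {C : ℝ}
    (hle : ∀ x, |u x| ≤ C * (1 + ∑ i, (x i - x₀ i) ^ 2)) :
    Integrable fun x ↦ u x * normSqF Γ x * gaussWeight x₀ t₀ x := by
  refine integrable_mul_gaussWeight_of_abs_le (C := C)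
    (hu.mul (contDiff_normSqF hΓ).continuous) (fun x ↦ ?_) hint
  rw [abs_mul, abs_of_nonneg (normSqF_nonneg Γ x), ← mul_assoc]
  exact mul_le_mul_of_nonneg_right (hle x) (normSqF_nonneg Γ x)

lemma integrable_mul_stress_mul_gaussWeight (hΓ : Smooth Γ)
    (hint : Integrable fun x ↦ (1 + ∑ i, (x i - x₀ i) ^ 2) * normSqF Γ x * gaussWeight x₀ t₀ x)
    {u : (Fin n → ℝ) → ℝ} (hu : Continuous u) (hle : ∀ x, |u x| ≤ 1 + ∑ i, (x i - x₀ i) ^ 2)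
    (i j : Fin n) : Integrable fun x ↦ u x * stress Γ i j x * gaussWeight x₀ t₀ x := by
  refine integrable_mul_gaussWeight_of_abs_le (C := 2)
    (hu.mul (contDiff_stress hΓ i j).continuous) (fun x ↦ ?_) hint
  calc |u x * stress Γ i j x| = |u x| * |stress Γ i j x| := abs_mul _ _
    _ ≤ (1 + ∑ i, (x i - x₀ i) ^ 2) * (2 * normSqF Γ x) :=
      mul_le_mul (hle x) (abs_stress_le Γ i j x) (abs_nonneg _) ((abs_nonneg _).trans (hle x))
    _ = 2 * ((1 + ∑ i, (x i - x₀ i) ^ 2) * normSqF Γ x) := by ring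

lemma abs_sub_apply_le_one_add_sum_sq (x x₀ : Fin n → ℝ) (i : Fin n) :
    |x i - x₀ i| ≤ 1 + ∑ j, (x j - x₀ j) ^ 2 := by
  have h : (x i - x₀ i) ^ 2 ≤ ∑ j, (x j - x₀ j) ^ 2 :=
    Finset.single_le_sum (f := fun j ↦ (x j - x₀ j) ^ 2) (fun _ _ ↦ sq_nonneg _)
      (Finset.mem_univ i)
  nlinarith [sq_abs (x i - x₀ i), sq_nonneg (|x i - x₀ i| - 1)]

theorem IsSolitonAt.integral_dilation_eq_zero (hsol : IsSolitonAt Γ x₀ t₀) (hΓ : Smooth Γ)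
    (hmc : MetricCompat Γ)
    (hint : Integrable fun x ↦
      (1 + ∑ i, (x i - x₀ i) ^ 2) * normSqF Γ x * gaussWeight x₀ t₀ x) :
    ∫ x, (4 - n + (∑ i, (x i - x₀ i) ^ 2) / (2 * t₀)) * normSqF Γ x * gaussWeight x₀ t₀ x = 0 := by
  have hfderiv (i j : Fin n) (x : Fin n → ℝ) :
      fderiv ℝ (fun y ↦ y i - x₀ i) x (Pi.single j 1) = if i = j then 1 else 0 := by
    rw [fderiv_sub_const, (hasFDerivAt_apply i x).fderiv]
    exact Pi.single_apply j 1 i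
  have hfield (x : Fin n → ℝ) :
      ∑ i, (∑ j, fderiv ℝ (fun y ↦ y i - x₀ i) x (Pi.single j 1) * stress Γ i j x
        + (x i - x₀ i) * ((x i - x₀ i) / (8 * t₀) * normSqF Γ x))
      = 1 / 4 * (4 - n + (∑ i, (x i - x₀ i) ^ 2) / (2 * t₀)) * normSqF Γ x := by
    have hradial : ∑ i, (x i - x₀ i) * ((x i - x₀ i) / (8 * t₀) * normSqF Γ x)
        = (∑ i, (x i - x₀ i) ^ 2) / (8 * t₀) * normSqF Γ x := by
      rw [Finset.sum_div, Finset.sum_mul]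
      exact Finset.sum_congr rfl fun i _ ↦ by ring
    simp only [hfderiv, ite_mul, one_mul, zero_mul, Finset.sum_ite_eq, Finset.mem_univ, if_true,
      Finset.sum_add_distrib, sum_stress_self, hradial]
    ring
  have hbound (x : Fin n → ℝ) : |1 / 4 * (4 - n + (∑ i, (x i - x₀ i) ^ 2) / (2 * t₀))|
      ≤ (|4 - (n : ℝ)| + |(2 * t₀)⁻¹|) * (1 + ∑ i, (x i - x₀ i) ^ 2) := by
    have hr : 0 ≤ ∑ i, (x i - x₀ i) ^ 2 := Finset.sum_nonneg fun _ _ ↦ sq_nonneg _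
    have := abs_add_le (4 - (n : ℝ)) ((∑ i, (x i - x₀ i) ^ 2) * (2 * t₀)⁻¹)
    rw [abs_mul _ (2 * t₀)⁻¹, abs_of_nonneg hr] at this
    rw [abs_mul, abs_of_nonneg (by norm_num), div_eq_mul_inv _ (2 * t₀)]
    nlinarith [abs_nonneg (4 - (n : ℝ)), abs_nonneg (2 * t₀)⁻¹,
      mul_nonneg (abs_nonneg (4 - (n : ℝ))) hr, mul_nonneg (abs_nonneg (2 * t₀)⁻¹) hr]
  have h := hsol.integral_sum_fderiv_mul_stress_add_eq_zero hΓ hmc (V := fun i y ↦ y i - x₀ i)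
    (fun i ↦ by fun_prop)
    (fun i ↦ integrable_mul_stress_mul_gaussWeight hΓ hint (by fun_prop)
      (abs_sub_apply_le_one_add_sum_sq · x₀ i) i)
  simp only [hfield] at h
  have h0 := h (integrable_mul_normSqF_mul_gaussWeight hΓ hint (by fun_prop) hbound)
  simpa only [mul_assoc, integral_const_mul, mul_eq_zero, one_div, inv_eq_zero, OfNat.ofNat_ne_zero,
    false_or] using h0

theorem IsSolitonAt.integral_translation_eq_zero (hsol : IsSolitonAt Γ x₀ t₀) (hΓ : Smooth Γ)
    (hmc : MetricCompat Γ) (ht₀ : t₀ ≠ 0)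
    (hint : Integrable fun x ↦
      (1 + ∑ i, (x i - x₀ i) ^ 2) * normSqF Γ x * gaussWeight x₀ t₀ x) (γ : Fin n) :
    ∫ x, (x γ - x₀ γ) * normSqF Γ x * gaussWeight x₀ t₀ x = 0 := by
  have hfield (x : Fin n → ℝ) :
      ∑ i, (∑ j, fderiv ℝ (fun _ ↦ (Pi.single γ 1 : Fin n → ℝ) i) x (Pi.single j 1)
          * stress Γ i j x
        + (Pi.single γ 1 : Fin n → ℝ) i * ((x i - x₀ i) / (8 * t₀) * normSqF Γ x))
      = (8 * t₀)⁻¹ * (x γ - x₀ γ) * normSqF Γ x := by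
    simp only [fderiv_fun_const, Pi.zero_apply, _root_.zero_apply, zero_mul, Finset.sum_const_zero,
      zero_add, Pi.single_apply, ite_mul, one_mul, Finset.sum_ite_eq', Finset.mem_univ, if_true]
    ring
  have hone (i : Fin n) (x : Fin n → ℝ) :
      |(Pi.single γ 1 : Fin n → ℝ) i| ≤ 1 + ∑ j, (x j - x₀ j) ^ 2 := by
    have hr : 0 ≤ ∑ j, (x j - x₀ j) ^ 2 := Finset.sum_nonneg fun _ _ ↦ sq_nonneg _
    rw [Pi.single_apply]
    split_ifs
    · rw [abs_one]
      linarith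
    · rw [abs_zero]
      linarith
  have hbound (x : Fin n → ℝ) :
      |(8 * t₀)⁻¹ * (x γ - x₀ γ)| ≤ |(8 * t₀)⁻¹| * (1 + ∑ j, (x j - x₀ j) ^ 2) := by
    rw [abs_mul]
    gcongr
    exact abs_sub_apply_le_one_add_sum_sq x x₀ γ
  have h := hsol.integral_sum_fderiv_mul_stress_add_eq_zero hΓ hmc
    (V := fun i _ ↦ (Pi.single γ 1 : Fin n → ℝ) i) (fun i ↦ contDiff_const)
    (fun i ↦ integrable_mul_stress_mul_gaussWeight hΓ hint continuous_const (hone i) i)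
  simp only [hfield] at h
  have h0 := h (integrable_mul_normSqF_mul_gaussWeight hΓ hint (by fun_prop) hbound)
  simpa only [mul_assoc, integral_const_mul, mul_eq_zero, inv_eq_zero, OfNat.ofNat_ne_zero, ht₀,
    false_or] using h0

end Soliton

section PolynomialGrowth

variable {Γ : Conn n m}

lemma PolyCurvGrowth2.polyCurvGrowth (hpoly : PolyCurvGrowth2 Γ) : PolyCurvGrowth Γ := by
  obtain ⟨p, hp⟩ := hpoly
  refine ⟨p, fun x ↦ le_trans ?_ (hp x)⟩
  rw [add_assoc]
  refine le_add_of_nonneg_right (add_nonneg ?_ ?_)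
  · exact Finset.sum_nonneg fun _ _ ↦ Finset.sum_nonneg fun _ _ ↦ Finset.sum_nonneg fun _ _ ↦
      Real.sqrt_nonneg _
  · exact Finset.sum_nonneg fun _ _ ↦ Finset.sum_nonneg fun _ _ ↦ Finset.sum_nonneg fun _ _ ↦
      Finset.sum_nonneg fun _ _ ↦ Real.sqrt_nonneg _

lemma sum_sub_sq_le (x x₀ : Fin n → ℝ) :
    ∑ i, (x i - x₀ i) ^ 2 ≤ 2 * enorm x ^ 2 + 2 * enorm x₀ ^ 2 := by
  rw [enorm_sq, enorm_sq, Finset.mul_sum, Finset.mul_sum, ← Finset.sum_add_distrib]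
  gcongr with i
  linarith [sq_nonneg (x i + x₀ i)]

theorem PolyCurvGrowth.integrable_normSqF_mul_gaussWeight (hpoly : PolyCurvGrowth Γ)
    (hΓ : Smooth Γ) (x₀ : Fin n → ℝ) {t₀ : ℝ} (ht₀ : 0 < t₀) :
    Integrable fun x ↦ (1 + ∑ i, (x i - x₀ i) ^ 2) * normSqF Γ x * gaussWeight x₀ t₀ x := by
  obtain ⟨p, hp⟩ := hpoly
  let q : Polynomial ℝ := (1 + 2 * Polynomial.X ^ 2 + Polynomial.C (2 * enorm x₀ ^ 2)) * p ^ 2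
  refine integrable_mul_gaussWeight_of_abs_le (C := 1) (g := fun x ↦ q.eval (enorm x))
    (Continuous.mul (by fun_prop) (contDiff_normSqF hΓ).continuous) (fun x ↦ ?_)
    (integrable_eval_enorm_mul_gaussWeight ht₀ q)
  have hN := normSqF_nonneg Γ x
  have hFp : normSqF Γ x ≤ p.eval (enorm x) ^ 2 := calc
    normSqF Γ x = normF Γ x ^ 2 := (Real.sq_sqrt hN).symm
    _ ≤ p.eval (enorm x) ^ 2 := pow_le_pow_left₀ (Real.sqrt_nonneg _) (hp x) 2
  rw [abs_of_nonneg (by positivity), one_mul]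
  calc (1 + ∑ i, (x i - x₀ i) ^ 2) * normSqF Γ x
      ≤ (1 + (2 * enorm x ^ 2 + 2 * enorm x₀ ^ 2)) * p.eval (enorm x) ^ 2 := by
        gcongr
        exact sum_sub_sq_le x x₀
    _ = q.eval (enorm x) := by simp [q, add_assoc]

end PolynomialGrowth

end YM

theorem soliton_identities_ab_general {n m : ℕ} {Γ : YM.Conn n m} (hsm : YM.Smooth Γ)
    (hmc : YM.MetricCompat Γ) {x₀ : Fin n → ℝ} {t₀ : ℝ} (ht₀ : t₀ ≠ 0)
    (hsol : YM.IsSolitonAt Γ x₀ t₀)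
    (hint : Integrable fun x ↦
      (1 + ∑ i, (x i - x₀ i) ^ 2) * YM.normSqF Γ x * YM.gaussWeight x₀ t₀ x) :
    ∫ x, (4 - n + (∑ i, (x i - x₀ i) ^ 2) / (2 * t₀)) * YM.normSqF Γ x * YM.gaussWeight x₀ t₀ x = 0
      ∧ ∀ γ : Fin n, ∫ x, (x γ - x₀ γ) * YM.normSqF Γ x * YM.gaussWeight x₀ t₀ x = 0 :=
  ⟨hsol.integral_dilation_eq_zero hsm hmc hint,
    hsol.integral_translation_eq_zero hsm hmc ht₀ hint⟩

/-- **Soliton integral identities (a), (b)** (Corollary `5partlemma`). -/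
theorem soliton_identities_ab (n m : ℕ) (Γ : YM.Conn n m)
    (hsm : YM.Smooth Γ) (hmc : YM.MetricCompat Γ)
    (x₀ : Fin n → ℝ) (t₀ : ℝ) (ht₀ : 0 < t₀)
    (hsol : YM.IsSolitonAt Γ x₀ t₀) (hpoly : YM.PolyCurvGrowth2 Γ)
    (G₀ : (Fin n → ℝ) → ℝ)
    (hG₀ : G₀ = fun x => Real.exp (-(∑ i, (x i - x₀ i) ^ 2) / (4 * t₀))) :
    (∫ x : Fin n → ℝ,
        ((4 - (n : ℝ)) + (∑ i, (x i - x₀ i) ^ 2) / (2 * t₀))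
          * YM.normSqF Γ x * G₀ x) = 0 ∧
    (∀ γ : Fin n,
      (∫ x : Fin n → ℝ, (x γ - x₀ γ) * YM.normSqF Γ x * G₀ x) = 0) := by
  subst hG₀
  exact soliton_identities_ab_general hsm hmc ht₀.ne' hsol
    (hpoly.polyCurvGrowth.integrable_normSqF_mul_gaussWeight hsm x₀ ht₀)
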